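/- arXiv:2311.06877 — 3 statements merged into one kernel-verified Lean document; each statement's English description precedes it below -/
import Mathlib

section
/- For every natural number $n$ and every real number $r > 0$, $\int_{(n+1+r)/r}^{+\infty} (u-1)^n\, u^{-n-r-2} \left(\frac{ru}{n+1+r} - 1\right) du = \frac{r^r (n+1)^{n+1}}{(n+r+1)^{n+r+2}}$. -/
open Real MeasureTheory

/-- Lemma 2.2: for `n ∈ ℕ` and `r > 0`,
`∫_{(n+1+r)/r}^∞ (u-1)^n u^{-n-r-2} (ru/(n+1+r) - 1) du
  = r^r (n+1)^{n+1} / (n+r+1)^{n+r+2}`. -/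
theorem lemma22 (n : ℕ) (r : ℝ) (hr : 0 < r) :
    ∫ u in Set.Ici ((n + 1 + r) / r),
        (u - 1) ^ n * u ^ (-(n : ℝ) - r - 2) * (r * u / (n + 1 + r) - 1)
      = r ^ r * (n + 1 : ℝ) ^ (n + 1) / (n + r + 1) ^ ((n : ℝ) + r + 2) := by
  have hn : (0 : ℝ) ≤ n := Nat.cast_nonneg n
  have hN : (0 : ℝ) < n + 1 + r := by positivity
  have ha : 1 < ((n : ℝ) + 1 + r) / r := by
    rw [lt_div_iff₀ hr]; linarith
  rw [integral_Ici_eq_integral_Ioi]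
  have key := integral_Ioi_of_hasDerivAt_of_nonneg'
    (a := ((n : ℝ) + 1 + r) / r) (l := 0)
    (g := fun u : ℝ => -((u - 1) ^ (n + 1) * u ^ (-(n : ℝ) - 1 - r)) / (n + 1 + r))
    (g' := fun u : ℝ => (u - 1) ^ n * u ^ (-(n : ℝ) - r - 2) * (r * u / (n + 1 + r) - 1))
    ?_ ?_ ?_
  · rw [key]
    have h1 : ((n : ℝ) + 1 + r) / r - 1 = (n + 1) / r := by field_simp; ring
    have h2 : (((n : ℝ) + 1 + r) / r) ^ (-(n : ℝ) - 1 - r)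
        = r ^ r * r ^ (n + 1) / (n + 1 + r) ^ ((n : ℝ) + 1 + r) := by
      rw [show -(n : ℝ) - 1 - r = -((n : ℝ) + 1 + r) by ring, rpow_neg (by positivity),
        div_rpow hN.le hr.le, inv_div]
      congr 1
      rw [← rpow_natCast, ← rpow_add hr]
      congr 1
      push_cast; ring
    have h3 : ((n : ℝ) + r + 1) ^ ((n : ℝ) + r + 2)
        = (n + 1 + r) ^ ((n : ℝ) + 1 + r) * (n + 1 + r) := by
      rw [← rpow_add_one hN.ne']
      congr 1 <;> ring
    have h4 : (0 : ℝ) < (n + 1 + r) ^ ((n : ℝ) + 1 + r) := by positivity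
    rw [h1, h2, h3, div_pow]
    generalize ((n : ℝ) + 1 + r) ^ ((n : ℝ) + 1 + r) = X at *
    field_simp
    ring
  · intro u hu
    have hu1 : 1 < u := lt_of_lt_of_le ha hu
    have hu0 : 0 < u := by linarith
    have d1 : HasDerivAt (fun u : ℝ => (u - 1) ^ (n + 1)) (((n + 1 : ℕ) : ℝ) * (u - 1) ^ n) u := by
      refine HasDerivAt.congr_deriv (((hasDerivAt_id u).sub_const 1).pow (n + 1)) ?_
      simp
    have d2 := hasDerivAt_rpow_const (x := u) (p := -(n : ℝ) - 1 - r) (Or.inl hu0.ne')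
    refine HasDerivAt.congr_deriv ((d1.mul d2).neg.div_const ((n : ℝ) + 1 + r)) ?_
    have e1 : u ^ (-(n : ℝ) - 1 - r) = u ^ (-(n : ℝ) - r - 2) * u := by
      rw [← rpow_add_one hu0.ne']; congr 1; ring
    have e2 : u ^ (-(n : ℝ) - 1 - r - 1) = u ^ (-(n : ℝ) - r - 2) := by
      congr 1; ring
    rw [e1, e2]
    generalize u ^ (-(n : ℝ) - r - 2) = X
    push_cast
    field_simp
    ring
  · intro u hu
    have hu' : ((n : ℝ) + 1 + r) / r < u := hu
    have hu1 : 0 < u - 1 := by linarith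
    have hu0 : 0 < u := by linarith
    have : 0 ≤ r * u / (n + 1 + r) - 1 := by
      rw [sub_nonneg, le_div_iff₀ hN]
      rw [div_lt_iff₀ hr] at hu'
      linarith
    positivity
  · have t : Filter.Tendsto (fun u : ℝ => (u - 1) ^ (n + 1) * u ^ (-(n : ℝ) - 1 - r))
        Filter.atTop (nhds 0) := by
      refine tendsto_of_tendsto_of_tendsto_of_le_of_le' tendsto_const_nhds
        (tendsto_rpow_neg_atTop hr) ?_ ?_
      · filter_upwards [Filter.eventually_gt_atTop 1] with u hu
        have hu1 : 0 < u - 1 := by linarith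
        have hu0 : 0 < u := by linarith
        positivity
      · filter_upwards [Filter.eventually_gt_atTop 1] with u hu
        have hu1 : 0 ≤ u - 1 := by linarith
        have hu0 : 0 < u := by linarith
        calc (u - 1) ^ (n + 1) * u ^ (-(n : ℝ) - 1 - r)
            ≤ u ^ (n + 1) * u ^ (-(n : ℝ) - 1 - r) := by gcongr; linarith
          _ = u ^ (-r) := by
            rw [← rpow_natCast, ← rpow_add hu0]
            congr 1
            push_cast; ring
    simpa using t.neg.div_const ((n : ℝ) + 1 + r)
end

section
/- For every real number $r > 0$ and every natural number $n$, $\frac{n+1}{n+1+r} \int_0^{r/(n+1+r)} x^{r-1}(1-x)^n\, dx < \int_0^{r/(n+2+r)} x^{r-1}(1-x)^{n+1}\, dx$. -/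
open Real intervalIntegral

theorem aux_int (r : ℝ) (hr : 0 < r) (k : ℕ) (u v : ℝ) :
    IntervalIntegrable (fun x : ℝ => x ^ (r - 1) * (1 - x) ^ k) MeasureTheory.volume u v := by
  apply IntervalIntegrable.mul_continuousOn
  · exact intervalIntegral.intervalIntegrable_rpow' (by linarith)
  · fun_prop

theorem aux_deriv (r : ℝ) (n : ℕ) (x : ℝ) (hx : 0 < x) :
    HasDerivAt (fun x : ℝ => x ^ r * (1 - x) ^ (n + 1))
      ((n + 1 + r) * (x ^ (r - 1) * (1 - x) ^ (n + 1)) - (n + 1) * (x ^ (r - 1) * (1 - x) ^ n)) x := by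
  have h1 := Real.hasDerivAt_rpow_const (x := x) (p := r) (Or.inl hx.ne')
  have h2 : HasDerivAt (fun x : ℝ => (1 - x) ^ (n + 1)) (((n + 1 : ℕ) : ℝ) * (1 - x) ^ n * (-1)) x := by
    exact ((hasDerivAt_id x).const_sub 1).pow (n + 1)
  refine (h1.mul h2).congr_deriv ?_
  have : x ^ r = x ^ (r - 1) * x := by
    rw [← Real.rpow_add_one hx.ne']; simp
  rw [this]; push_cast; ring

theorem aux_cont (r : ℝ) (hr : 0 < r) (n : ℕ) :
    Continuous (fun x : ℝ => x ^ r * (1 - x) ^ (n + 1)) :=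
  (Real.continuous_rpow_const hr.le).mul (by fun_prop)

/-- For real `r > 0` and `n ∈ ℕ`,
`((n+1)/(n+1+r)) ∫_0^{r/(n+1+r)} x^{r-1}(1-x)^n dx < ∫_0^{r/(n+2+r)} x^{r-1}(1-x)^{n+1} dx`. -/
theorem integral_ineq (r : ℝ) (hr : 0 < r) (n : ℕ) :
    (n + 1) / (n + 1 + r) * ∫ x in (0:ℝ)..(r / (n + 1 + r)), x ^ (r - 1) * (1 - x) ^ n
      < ∫ x in (0:ℝ)..(r / (n + 2 + r)), x ^ (r - 1) * (1 - x) ^ (n + 1) := by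
  have hn : (0:ℝ) ≤ n := n.cast_nonneg
  have hs : (0:ℝ) < n + 1 + r := by positivity
  have hs' : (0:ℝ) < n + 2 + r := by positivity
  obtain ⟨a, ha⟩ : ∃ a, a = r / (n + 1 + r) := ⟨_, rfl⟩
  obtain ⟨b, hb⟩ : ∃ b, b = r / (n + 2 + r) := ⟨_, rfl⟩
  rw [← ha, ← hb]
  have ha0 : 0 < a := by rw [ha]; positivity
  have hb0 : 0 < b := by rw [hb]; positivity
  have hba : b < a := by
    rw [ha, hb]; apply div_lt_div_of_pos_left hr hs; linarith
  have ha1 : a < 1 := by rw [ha, div_lt_one hs]; linarith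
  have has : a * (n + 1 + r) = r := by rw [ha]; field_simp
  have hbs : b * (n + 2 + r) = r := by rw [hb]; field_simp
  -- fundamental theorem of calculus
  have key : (n + 1 + r) * (∫ x in (0:ℝ)..a, x ^ (r - 1) * (1 - x) ^ (n + 1))
      - (n + 1) * (∫ x in (0:ℝ)..a, x ^ (r - 1) * (1 - x) ^ n) = a ^ r * (1 - a) ^ (n + 1) := by
    have := integral_eq_sub_of_hasDerivAt_of_le ha0.le (aux_cont r hr n).continuousOn
      (fun x hx => aux_deriv r n x hx.1)
      (((aux_int r hr (n + 1) 0 a).const_mul _).sub ((aux_int r hr n 0 a).const_mul _))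
    rw [integral_sub ((aux_int r hr (n + 1) 0 a).const_mul _) ((aux_int r hr n 0 a).const_mul _),
      integral_const_mul, integral_const_mul] at this
    rw [this, Real.zero_rpow hr.ne']; ring
  have split := integral_add_adjacent_intervals (aux_int r hr (n + 1) 0 b) (aux_int r hr (n + 1) b a)
  have mono : MonotoneOn (fun x : ℝ => x ^ r * (1 - x) ^ (n + 1)) (Set.Icc 0 a) := by
    apply monotoneOn_of_deriv_nonneg (convex_Icc 0 a) (aux_cont r hr n).continuousOn
    · intro x hx
      rw [interior_Icc] at hx
      exact (aux_deriv r n x hx.1).differentiableAt.differentiableWithinAt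
    · intro x hx
      rw [interior_Icc] at hx
      rw [(aux_deriv r n x hx.1).deriv]
      have h1 : 0 ≤ x ^ (r - 1) * (1 - x) ^ n :=
        mul_nonneg (Real.rpow_nonneg hx.1.le _) (pow_nonneg (by linarith [hx.2]) _)
      have h2 : 0 ≤ r - x * (n + 1 + r) := by nlinarith [hx.2]
      have := mul_nonneg h1 h2
      rw [pow_succ]; nlinarith
  have hpos : 0 < a ^ r * (1 - a) ^ (n + 1) :=
    mul_pos (Real.rpow_pos_of_pos ha0 _) (pow_pos (by linarith) _)
  have bound : ∀ x ∈ Set.Icc b a,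
      x ^ (r - 1) * (1 - x) ^ (n + 1) ≤ a ^ r * (1 - a) ^ (n + 1) / x := by
    intro x hx
    have hx0 : 0 < x := hb0.trans_le hx.1
    have := mono ⟨hx0.le, hx.2⟩ ⟨ha0.le, le_rfl⟩ hx.2
    rw [le_div_iff₀ hx0]
    have e : x ^ r = x ^ (r - 1) * x := by
      rw [← Real.rpow_add_one hx0.ne']; simp
    simp only [e] at this
    nlinarith
  have lt : (∫ x in b..a, x ^ (r - 1) * (1 - x) ^ (n + 1))
      < ∫ x in b..a, a ^ r * (1 - a) ^ (n + 1) / b := by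
    apply integral_lt_integral_of_continuousOn_of_le_of_exists_lt hba
    · apply ContinuousOn.mul
      · intro x hx
        exact (Real.continuousAt_rpow_const _ _ (Or.inl (hb0.trans_le hx.1).ne')).continuousWithinAt
      · fun_prop
    · fun_prop
    · intro x hx
      refine (bound x ⟨hx.1.le, hx.2⟩).trans ?_
      exact div_le_div_of_nonneg_left hpos.le hb0 hx.1.le
    · refine ⟨a, ⟨hba.le, le_rfl⟩, (bound a ⟨hba.le, le_rfl⟩).trans_lt ?_⟩
      exact div_lt_div_of_pos_left hpos hb0 hba
  rw [integral_const, smul_eq_mul] at lt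
  have e2 : (a - b) * (a ^ r * (1 - a) ^ (n + 1) / b) = a ^ r * (1 - a) ^ (n + 1) / (n + 1 + r) := by
    have : (a - b) * (n + 1 + r) = b := by linarith
    rw [mul_div_assoc', div_eq_div_iff hb0.ne' hs.ne']
    linear_combination (a ^ r * (1 - a) ^ (n + 1)) * this
  rw [e2, lt_div_iff₀ hs] at lt
  rw [div_mul_eq_mul_div, div_lt_iff₀ hs]
  rw [← split] at key
  linarith
end

section
/- For every real number $r > 0$ and every natural number $n$, $\int_{(n+1+r)/r}^{(n+2+r)/r} (u-1)^{n+1}\, u^{-n-r-2}\, du < \frac{r^r (n+1)^{n+1}}{(n+r+1)^{n+r+2}}$. -/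
open Real intervalIntegral

lemma aux_bound (m r u : ℝ) (hm : 0 < m) (hr : 0 < r) (hu : 1 < u) :
    (u - 1) ^ m * u ^ (-m - r - 1) ≤ r ^ r * m ^ m / (m + r) ^ (m + r) * u⁻¹ := by
  have hu0 : 0 < u := by linarith
  have hu1 : 0 < u - 1 := by linarith
  have hs : 0 < m + r := by linarith
  have h := Real.geom_mean_le_arith_mean2_weighted (w₁ := m / (m + r)) (w₂ := r / (m + r))
    (p₁ := (u - 1) / (u * m)) (p₂ := 1 / (u * r)) (by positivity) (by positivity)
    (by positivity) (by positivity) (by field_simp)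
  have e : m / (m + r) * ((u - 1) / (u * m)) + r / (m + r) * (1 / (u * r)) = 1 / (m + r) := by
    field_simp
    ring
  rw [e] at h
  have h2 := Real.rpow_le_rpow (by positivity) h hs.le
  rw [Real.mul_rpow (by positivity) (by positivity), ← Real.rpow_mul (by positivity),
    ← Real.rpow_mul (by positivity), div_mul_cancel₀ _ hs.ne', div_mul_cancel₀ _ hs.ne',
    Real.div_rpow hu1.le (by positivity), Real.div_rpow zero_le_one (by positivity),
    Real.div_rpow zero_le_one (by positivity), Real.mul_rpow hu0.le hm.le,
    Real.mul_rpow hu0.le hr.le, Real.one_rpow, Real.one_rpow] at h2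
  have e2 : u ^ (-m - r - 1) = (u ^ m)⁻¹ * (u ^ r)⁻¹ * u⁻¹ := by
    rw [← Real.rpow_neg hu0.le, ← Real.rpow_neg hu0.le, ← Real.rpow_neg_one u,
      ← Real.rpow_add hu0, ← Real.rpow_add hu0]
    congr 1
  rw [e2]
  have := mul_le_mul_of_nonneg_left h2 (show 0 ≤ r ^ r * m ^ m * u⁻¹ by positivity)
  have hA := (Real.rpow_pos_of_pos hr r).ne'
  have hB := (Real.rpow_pos_of_pos hm m).ne'
  have hC := (Real.rpow_pos_of_pos hu0 m).ne'
  have hD := (Real.rpow_pos_of_pos hu0 r).ne'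
  have hE := (Real.rpow_pos_of_pos hs (m + r)).ne'
  generalize r ^ r = A at *
  generalize m ^ m = B at *
  generalize u ^ m = C at *
  generalize u ^ r = D at *
  generalize (m + r) ^ (m + r) = E at *
  generalize (u - 1) ^ m = F at *
  calc _ = A * B * u⁻¹ * (F / (C * B) * (1 / (D * A))) := by field_simp
    _ ≤ _ := this
    _ = _ := by field_simp

/-- For real `r > 0` and `n ∈ ℕ`,
`∫_{(n+1+r)/r}^{(n+2+r)/r} (u-1)^{n+1} u^{-n-r-2} du < r^r (n+1)^{n+1} / (n+r+1)^{n+r+2}`. -/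
theorem integral_lt (r : ℝ) (hr : 0 < r) (n : ℕ) :
    (∫ u in ((n + 1 + r) / r)..((n + 2 + r) / r), (u - 1) ^ (n + 1) * u ^ (-(n : ℝ) - r - 2))
      < r ^ r * (n + 1 : ℝ) ^ (n + 1) / (n + r + 1) ^ ((n : ℝ) + r + 2) := by
  have hm : (0 : ℝ) < n + 1 := by positivity
  have hs : (0 : ℝ) < n + 1 + r := by positivity
  have ha : 1 < ((n + 1 + r) / r : ℝ) := by rw [lt_div_iff₀ hr]; linarith
  have hab : ((n + 1 + r) / r : ℝ) < (n + 2 + r) / r := by gcongr; norm_num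
  set K : ℝ := r ^ r * (n + 1 : ℝ) ^ (n + 1) / (n + 1 + r) ^ ((n : ℝ) + 1 + r) with hK
  have hKpos : 0 < K := by positivity
  have key : ∀ u : ℝ, 1 < u → (u - 1) ^ (n + 1) * u ^ (-(n : ℝ) - r - 2) ≤ K * u⁻¹ := by
    intro u hu
    have h := aux_bound (n + 1) r u hm hr hu
    have c : ((n : ℝ) + 1) = ((n + 1 : ℕ) : ℝ) := by push_cast; rfl
    have e1 : (u - 1) ^ ((n : ℝ) + 1) = (u - 1) ^ (n + 1) := by rw [c, Real.rpow_natCast]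
    have e2 : ((n : ℝ) + 1) ^ ((n : ℝ) + 1) = ((n : ℝ) + 1) ^ (n + 1) := by
      conv_lhs => rw [show ((n : ℝ) + 1) ^ ((n : ℝ) + 1) = ((n : ℝ) + 1) ^ (((n + 1 : ℕ) : ℝ)) by rw [← c]]
      rw [Real.rpow_natCast]
    rw [e1, e2, show -((n : ℝ) + 1) - r - 1 = -(n : ℝ) - r - 2 by ring] at h
    exact h
  have hlt := intervalIntegral.integral_lt_integral_of_continuousOn_of_le_of_exists_lt
    (f := fun u : ℝ => (u - 1) ^ (n + 1) * u ^ (-(n : ℝ) - r - 2))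
    (g := fun _ : ℝ => K * ((n + 1 + r) / r : ℝ)⁻¹) hab
    (by
      refine ContinuousOn.mul (by fun_prop) ?_
      refine ContinuousOn.rpow_const continuousOn_id ?_
      intro x hx
      left
      have := hx.1
      exact (show (0 : ℝ) < x by linarith).ne')
    continuousOn_const
    (by
      intro u hu
      refine (key u (ha.trans hu.1)).trans ?_
      have := hu.1
      gcongr)
    ⟨(n + 2 + r) / r, Set.right_mem_Icc.2 hab.le, by
      refine (key _ (ha.trans hab)).trans_lt ?_
      gcongr⟩
  refine hlt.trans_eq ?_
  rw [intervalIntegral.integral_const, smul_eq_mul, hK,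
    show (n : ℝ) + r + 1 = n + 1 + r by ring, show (n : ℝ) + r + 2 = (n + 1 + r) + 1 by ring,
    Real.rpow_add_one hs.ne']
  have := (Real.rpow_pos_of_pos hs ((n : ℝ) + 1 + r)).ne'
  generalize ((n : ℝ) + 1 + r) ^ ((n : ℝ) + 1 + r) = E at *
  field_simp
  ring
end
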